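/- arXiv:1101.1800 — 5 statements merged into one kernel-verified Lean document; each statement's English description precedes it below -/
import Mathlib

section
/- Every nonempty subset W of 𝓡 that is bounded above with respect to ⪯ has a least upper bound in (𝓡,⪯), and every nonempty subset of 𝓡 that is bounded below with respect to ⪯ has a greatest lower bound in (𝓡,⪯). -/
/-- The ambient space `𝓡` of decimal representations: an integer part together
with a sequence of digits in `{0,…,9}`. -/
abbrev DecimalRep := ℤ × (ℕ → Fin 10)

namespace DecimalRep

open scoped Classical

/-- The truncation `[x]_k = x₀ + ∑_{i=1}^k x_i / 10^i` of `x` up to the `k`-th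
digit, as a rational number. -/
def trunc (x : DecimalRep) (k : ℕ) : ℚ :=
  (x.1 : ℚ) + ∑ i ∈ Finset.range k, ((x.2 i : ℕ) : ℚ) / 10 ^ (i + 1)

/-- The order `⪯` on `𝓡`: `x ⪯ y` iff every truncation of `x` is at most the
corresponding truncation of `y`. -/
def le (x y : DecimalRep) : Prop := ∀ k : ℕ, trunc x k ≤ trunc y k

/-- The strict order `≺` on `𝓡`. -/
def lt (x y : DecimalRep) : Prop := le x y ∧ x ≠ y

/-- Two decimal representations are equivalent ("have no gap") iff there is no
third element lying between them. -/
def equiv (x y : DecimalRep) : Prop :=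
  ¬ ∃ z : DecimalRep, z ≠ x ∧ z ≠ y ∧
      ((le x z ∧ le z y) ∨ (le y z ∧ le z x))

/-- `𝓡₉`: decimal representations ending in an infinite string of nines. -/
def allNines (x : DecimalRep) : Prop := ∃ N : ℕ, ∀ k ≥ N, x.2 k = 9

/-- `ℚ_F`: decimal representations ending in an infinite string of zeros. -/
def finiteDec (x : DecimalRep) : Prop := ∃ N : ℕ, ∀ k ≥ N, x.2 k = 0

/-- The decimal expansion map `ι : ℚ → 𝓡`, satisfying
`[ι(α)]_k = ⌊10^k·α⌋/10^k` for all `k`. -/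
def iota (α : ℚ) : DecimalRep :=
  (⌊α⌋, fun k => ⟨(⌊α * 10 ^ (k + 1)⌋ % 10).toNat, by
    have h1 : (0 : ℤ) ≤ ⌊α * 10 ^ (k + 1)⌋ % 10 := Int.emod_nonneg _ (by norm_num)
    have h2 : ⌊α * 10 ^ (k + 1)⌋ % 10 < 10 := Int.emod_lt_of_pos _ (by norm_num)
    omega⟩)

/-- `M` is a least upper bound of `W` in `(𝓡,⪯)`. -/
def IsLub (W : Set DecimalRep) (M : DecimalRep) : Prop :=
  (∀ w ∈ W, le w M) ∧ ∀ M' : DecimalRep, (∀ w ∈ W, le w M') → le M M'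

/-- `M` is a greatest lower bound of `W` in `(𝓡,⪯)`. -/
def IsGlb (W : Set DecimalRep) (M : DecimalRep) : Prop :=
  (∀ w ∈ W, le M w) ∧ ∀ M' : DecimalRep, (∀ w ∈ W, le M' w) → le M' M

/-- The least upper bound of a set in `(𝓡,⪯)` (junk value if none exists). -/
noncomputable def sup (W : Set DecimalRep) : DecimalRep :=
  if h : ∃ M, IsLub W M then h.choose else default

/-- The greatest lower bound of a set in `(𝓡,⪯)` (junk value if none exists). -/
noncomputable def inf (W : Set DecimalRep) : DecimalRep :=
  if h : ∃ M, IsGlb W M then h.choose else default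

/-- Addition `x ⊕ y := sup {ι([x]_k + [y]_k) : k ∈ ℕ}` on `𝓡`. -/
noncomputable def add (x y : DecimalRep) : DecimalRep :=
  sup { z | ∃ k : ℕ, z = iota (trunc x k + trunc y k) }

/-- The "additive inverse" map `Ψ(x₀.x₁x₂⋯) = (−1−x₀).(9−x₁)(9−x₂)⋯`. -/
def psi (x : DecimalRep) : DecimalRep :=
  (-1 - x.1, fun k => ⟨9 - (x.2 k).val, by have := (x.2 k).isLt; omega⟩)

/-- The signal map: `0` on the nonnegative part, `1` on the negative part. -/
noncomputable def sign (x : DecimalRep) : ℕ :=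
  if le (iota 0) x then 0 else 1

/-- The absolute value `‖x‖ := max {x, Ψ(x)}` with respect to `⪯`. -/
noncomputable def norm (x : DecimalRep) : DecimalRep :=
  if le x (psi x) then psi x else x

/-- Multiplication
`x ⊗ y := Ψ^(sign x + sign y) (sup {ι([‖x‖]_k · [‖y‖]_k) : k ∈ ℕ})` on `𝓡`. -/
noncomputable def mul (x y : DecimalRep) : DecimalRep :=
  psi^[sign x + sign y]
    (sup { z | ∃ k : ℕ, z = iota (trunc (norm x) k * trunc (norm y) k) })

/-- The multiplicative inverse
`x⁻¹ := Ψ^(sign x) (inf {ι(1/[‖x‖]_k) : k ∈ ℕ, [‖x‖]_k > 0})`. -/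
noncomputable def inv (x : DecimalRep) : DecimalRep :=
  psi^[sign x]
    (inf { z | ∃ k : ℕ, 0 < trunc (norm x) k ∧ z = iota (1 / trunc (norm x) k) })

/-- A sequence of rationals is Cauchy. -/
def IsCauchy (x : ℕ → ℚ) : Prop :=
  ∀ ε : ℚ, 0 < ε → ∃ N : ℕ, ∀ m n : ℕ, N ≤ m → N ≤ n → |x m - x n| < ε

/-- The upper limit `inf { sup {f k : k ≥ n} : n ∈ ℕ }` of a sequence in `𝓡`. -/
noncomputable def upperLimit (f : ℕ → DecimalRep) : DecimalRep :=
  inf { z | ∃ n : ℕ, z = sup { w | ∃ k : ℕ, n ≤ k ∧ w = f k } }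

/-- The lower limit `sup { inf {f k : k ≥ n} : n ∈ ℕ }` of a sequence in `𝓡`. -/
noncomputable def lowerLimit (f : ℕ → DecimalRep) : DecimalRep :=
  sup { z | ∃ n : ℕ, z = inf { w | ∃ k : ℕ, n ≤ k ∧ w = f k } }

end DecimalRep

namespace DecimalRep

/-- The integer `10^k [x]_k`. -/
def itr (x : DecimalRep) : ℕ → ℤ
  | 0 => x.1
  | k + 1 => 10 * itr x k + ((x.2 k : ℕ) : ℤ)

lemma trunc_eq_itr (x : DecimalRep) (k : ℕ) : trunc x k = (itr x k : ℚ) / 10 ^ k := by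
  induction k with
  | zero => simp [trunc, itr]
  | succ k ih =>
    have h : trunc x (k + 1) = trunc x k + ((x.2 k : ℕ) : ℚ) / 10 ^ (k + 1) := by
      simp only [trunc, Finset.sum_range_succ]
      ring
    rw [h, ih]
    simp only [itr]
    push_cast
    field_simp
    ring

lemma le_iff_itr (x y : DecimalRep) : le x y ↔ ∀ k, itr x k ≤ itr y k := by
  unfold le
  refine forall_congr' fun k => ?_
  rw [trunc_eq_itr, trunc_eq_itr, div_le_div_iff_of_pos_right (by positivity)]
  exact Int.cast_le

lemma itr_bounds (x : DecimalRep) (k : ℕ) :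
    10 * itr x k ≤ itr x (k + 1) ∧ itr x (k + 1) ≤ 10 * itr x k + 9 := by
  have := (x.2 k).isLt
  simp only [itr]
  omega

lemma exists_of_itr (S : ℕ → ℤ)
    (hS : ∀ k, 10 * S k ≤ S (k + 1) ∧ S (k + 1) ≤ 10 * S k + 9) :
    ∃ L : DecimalRep, ∀ k, itr L k = S k := by
  refine ⟨(S 0, fun k => ⟨(S (k + 1) - 10 * S k).toNat, by have := hS k; omega⟩), fun k => ?_⟩
  induction k with
  | zero => rfl
  | succ k ih =>
    have := hS k
    simp only [itr, ih]
    omega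

end DecimalRep

open DecimalRep in
/-- Every nonempty subset of `(𝓡,⪯)` bounded above has a least upper bound,
and every nonempty subset bounded below has a greatest lower bound. -/
theorem lub_and_glb_property :
    (∀ W : Set DecimalRep, W.Nonempty → (∃ M, ∀ w ∈ W, le w M) →
      ∃ L, IsLub W L) ∧
    (∀ W : Set DecimalRep, W.Nonempty → (∃ M, ∀ w ∈ W, le M w) →
      ∃ L, IsGlb W L) := by
  unfold IsLub IsGlb
  simp only [le_iff_itr]
  constructor
  · rintro W ⟨w0, hw0⟩ ⟨M, hM⟩
    have key : ∀ k, ∃ w ∈ W, ∀ v ∈ W, itr v k ≤ itr w k := by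
      intro k
      obtain ⟨s, ⟨w, hw, rfl⟩, h⟩ := Int.exists_greatest_of_bdd
        (P := fun z => ∃ w ∈ W, itr w k = z)
        ⟨itr M k, by rintro z ⟨w, hw, rfl⟩; exact hM w hw k⟩ ⟨_, w0, hw0, rfl⟩
      exact ⟨w, hw, fun v hv => h _ ⟨v, hv, rfl⟩⟩
    choose f hf hmax using key
    obtain ⟨L, hL⟩ := exists_of_itr (fun k => itr (f k) k) (by
      intro k
      have h1 := itr_bounds (f k) k
      have h2 := itr_bounds (f (k + 1)) k
      have h3 := hmax (k + 1) _ (hf k)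
      have h4 := hmax k _ (hf (k + 1))
      omega)
    refine ⟨L, fun w hw k => ?_, fun M' h k => ?_⟩
    · rw [hL]; exact hmax k w hw
    · rw [hL]; exact h _ (hf k) k
  · rintro W ⟨w0, hw0⟩ ⟨M, hM⟩
    have key : ∀ k, ∃ w ∈ W, ∀ v ∈ W, itr w k ≤ itr v k := by
      intro k
      obtain ⟨s, ⟨w, hw, rfl⟩, h⟩ := Int.exists_least_of_bdd
        (P := fun z => ∃ w ∈ W, itr w k = z)
        ⟨itr M k, by rintro z ⟨w, hw, rfl⟩; exact hM w hw k⟩ ⟨_, w0, hw0, rfl⟩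
      exact ⟨w, hw, fun v hv => h _ ⟨v, hv, rfl⟩⟩
    choose f hf hmin using key
    obtain ⟨L, hL⟩ := exists_of_itr (fun k => itr (f k) k) (by
      intro k
      have h1 := itr_bounds (f k) k
      have h2 := itr_bounds (f (k + 1)) k
      have h3 := hmin (k + 1) _ (hf k)
      have h4 := hmin k _ (hf (k + 1))
      omega)
    refine ⟨L, fun w hw k => ?_, fun M' h k => ?_⟩
    · rw [hL]; exact hmin k w hw
    · rw [hL]; exact h _ (hf k) k
end

section
/- If x, y ∈ 𝓡 satisfy x ⪯ y, x ≠ y and x ∼ y, then x ∈ 𝓡₉ and y ∈ ℚ_F. -/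
namespace DecimalRep

theorem aux_trunc_succ (x : DecimalRep) (k : ℕ) :
    trunc x (k + 1) = trunc x k + ((x.2 k : ℕ) : ℚ) / 10 ^ (k + 1) := by
  unfold trunc
  rw [Finset.sum_range_succ]
  ring

theorem aux_mono (x : DecimalRep) {N j : ℕ} (h : N ≤ j) : trunc x N ≤ trunc x j := by
  induction j, h using Nat.le_induction with
  | base => exact le_rfl
  | succ j h ih =>
    rw [aux_trunc_succ]
    have : (0 : ℚ) ≤ ((x.2 j : ℕ) : ℚ) / 10 ^ (j + 1) := by positivity
    linarith

theorem aux_upper (x : DecimalRep) {N j : ℕ} (h : N ≤ j) :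
    trunc x j + 1 / 10 ^ j ≤ trunc x N + 1 / 10 ^ N := by
  induction j, h using Nat.le_induction with
  | base => exact le_rfl
  | succ j h ih =>
    rw [aux_trunc_succ]
    have h9 : ((x.2 j : ℕ) : ℚ) ≤ 9 := by
      have := (x.2 j).isLt
      exact_mod_cast (by omega : (x.2 j : ℕ) ≤ 9)
    have h1 : ((x.2 j : ℕ) : ℚ) / 10 ^ (j + 1) ≤ 9 / 10 ^ (j + 1) := by gcongr
    have h2 : (9 : ℚ) / 10 ^ (j + 1) + 1 / 10 ^ (j + 1) = 1 / 10 ^ j := by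
      rw [pow_succ]; field_simp; norm_num
    linarith

theorem aux_int (x : DecimalRep) (N : ℕ) : ∃ m : ℤ, trunc x N = m / 10 ^ N := by
  induction N with
  | zero => exact ⟨x.1, by simp [trunc]⟩
  | succ N ih =>
    obtain ⟨m, hm⟩ := ih
    refine ⟨m * 10 + ((x.2 N : ℕ) : ℤ), ?_⟩
    rw [aux_trunc_succ, hm, pow_succ]
    push_cast
    field_simp

theorem aux_gap {x y : DecimalRep} {N : ℕ} (h : trunc x N < trunc y N) :
    trunc x N + 1 / 10 ^ N ≤ trunc y N := by
  obtain ⟨m, hm⟩ := aux_int x N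
  obtain ⟨n, hn⟩ := aux_int y N
  rw [hm, hn] at h ⊢
  have hp : (0 : ℚ) < 10 ^ N := by positivity
  rw [div_lt_div_iff_of_pos_right hp] at h
  rw [← add_div, div_le_div_iff_of_pos_right hp]
  have : m < n := by exact_mod_cast h
  exact_mod_cast (by omega : m + 1 ≤ n)

theorem aux_sep {x y : DecimalRep} {N j : ℕ} (h : trunc x N < trunc y N) (hj : N ≤ j) :
    trunc x j < trunc y j := by
  have h1 := aux_gap h
  have h2 := aux_upper x hj
  have h3 := aux_mono y hj
  have hp : (0 : ℚ) < 1 / 10 ^ j := by positivity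
  linarith

theorem aux_ext {x y : DecimalRep} (h : ∀ k, trunc x k = trunc y k) : x = y := by
  refine Prod.ext ?_ (funext fun k => ?_)
  · have := h 0
    simp only [trunc, Finset.range_zero, Finset.sum_empty, add_zero] at this
    exact_mod_cast this
  · have h1 := h (k + 1)
    rw [aux_trunc_succ, aux_trunc_succ, h k, add_right_inj,
      div_left_inj' (by positivity)] at h1
    exact Fin.ext (by exact_mod_cast h1)

theorem aux_le_of_digits {x y : DecimalRep} (h : x.1 = y.1) (hd : ∀ i, x.2 i ≤ y.2 i) :
    le x y := by
  intro k
  unfold trunc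
  rw [h]
  gcongr with i _
  exact hd i

theorem aux_local (x : DecimalRep) {j k : ℕ} (d : Fin 10) (h : j ≤ k) :
    trunc (x.1, Function.update x.2 k d) j = trunc x j := by
  unfold trunc
  congr 1
  refine Finset.sum_congr rfl fun i hi => ?_
  have : i ≠ k := by have := Finset.mem_range.1 hi; omega
  simp [Function.update_of_ne this]

theorem aux_ne (x : DecimalRep) {k : ℕ} {d : Fin 10} (h : x.2 k ≠ d) :
    ((x.1, Function.update x.2 k d) : DecimalRep) ≠ x := by
  intro e
  have := congrFun (congrArg Prod.snd e) k
  simp at this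
  exact h this.symm

end DecimalRep

open DecimalRep in
/-- If `x ⪯ y`, `x ≠ y` and `x ∼ y`, then `x ∈ 𝓡₉` and `y ∈ ℚ_F`. -/
theorem allNines_and_finiteDec_of_equiv (x y : DecimalRep)
    (hle : le x y) (hne : x ≠ y) (heq : equiv x y) :
    allNines x ∧ finiteDec y := by
  have hN : ∃ N, trunc x N < trunc y N := by
    by_contra hcon
    push Not at hcon
    exact hne (aux_ext fun k => le_antisymm (hle k) (hcon k))
  obtain ⟨N, hN⟩ := hN
  refine ⟨⟨N, fun k hk => ?_⟩, ⟨N, fun k hk => ?_⟩⟩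
  · by_contra h9
    have hz : trunc (x.1, Function.update x.2 k 9) N < trunc y N := by
      rwa [aux_local x 9 hk]
    refine heq ⟨(x.1, Function.update x.2 k 9), aux_ne x h9, ?_, Or.inl ⟨?_, ?_⟩⟩
    · intro e
      rw [e] at hz
      exact lt_irrefl _ hz
    · refine aux_le_of_digits rfl fun i => ?_
      by_cases hi : i = k
      · subst hi
        simp only [Function.update_self]
        exact Fin.le_last _
      · simp [Function.update_of_ne hi]
    · intro j
      rcases le_total j k with hj | hj
      · rw [aux_local x 9 hj]; exact hle j
      · exact (aux_sep hz (hk.le.trans hj)).le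
  · by_contra h0
    have hz : trunc x N < trunc (y.1, Function.update y.2 k 0) N := by
      rwa [aux_local y 0 hk]
    refine heq ⟨(y.1, Function.update y.2 k 0), ?_, aux_ne y h0, Or.inl ⟨?_, ?_⟩⟩
    · intro e
      rw [e] at hz
      exact lt_irrefl _ hz
    · intro j
      rcases le_total j k with hj | hj
      · rw [aux_local y 0 hj]; exact hle j
      · exact (aux_sep hz (hk.le.trans hj)).le
    · refine aux_le_of_digits rfl fun i => ?_
      by_cases hi : i = k
      · subst hi
        simp
      · simp [Function.update_of_ne hi]
end

section
/- For all x, y ∈ 𝓡: x ∼ y if and only if |[x]_k − [y]_k| ≤ 1/10^k for every k ∈ ℕ. -/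
namespace DecimalRep

/-- Integer truncation `10^k [x]_k`. -/
def T (x : DecimalRep) : ℕ → ℤ
  | 0 => x.1
  | k + 1 => 10 * T x k + ((x.2 k : ℕ) : ℤ)

lemma trunc_eq (x : DecimalRep) (k : ℕ) : trunc x k = (T x k : ℚ) / 10 ^ k := by
  induction k with
  | zero => simp [trunc, T]
  | succ k ih =>
    have : trunc x (k + 1) = trunc x k + ((x.2 k : ℕ) : ℚ) / 10 ^ (k + 1) := by
      simp only [trunc, Finset.sum_range_succ]; ring
    rw [this, ih, T]
    push_cast
    field_simp
    ring

lemma trunc_le_iff (x y : DecimalRep) (k : ℕ) : trunc x k ≤ trunc y k ↔ T x k ≤ T y k := by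
  rw [trunc_eq, trunc_eq, div_le_div_iff_of_pos_right (by positivity)]
  exact_mod_cast Iff.rfl

lemma close_iff (x y : DecimalRep) (k : ℕ) :
    |trunc x k - trunc y k| ≤ 1 / 10 ^ k ↔ |T x k - T y k| ≤ 1 := by
  rw [trunc_eq, trunc_eq, ← sub_div, abs_div, abs_of_pos (show (0 : ℚ) < 10 ^ k by positivity),
    div_le_div_iff_of_pos_right (by positivity)]
  exact_mod_cast Iff.rfl

lemma lt_persist (x y : DecimalRep) (k j : ℕ) (h : k ≤ j) (hk : T x k < T y k) :
    T x j < T y j := by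
  induction j, h using Nat.le_induction with
  | base => exact hk
  | succ n hn ih =>
    have h1 := (x.2 n).isLt
    simp only [T]
    omega

lemma le_of_lt_T (x y : DecimalRep) (k : ℕ) (hk : T x k < T y k) : le x y := by
  intro j
  rw [trunc_le_iff]
  by_contra hc
  push Not at hc
  rcases le_total k j with h | h
  · have := lt_persist x y k j h hk
    omega
  · have := lt_persist y x j k h hc
    omega

lemma ext_T (x y : DecimalRep) (h : ∀ k, T x k = T y k) : x = y := by
  apply Prod.ext
  · exact h 0
  · funext k
    have h1 := h k
    have h2 := h (k + 1)
    simp only [T] at h2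
    apply Fin.ext
    omega

lemma T_congr (x y : DecimalRep) (k : ℕ) (h0 : x.1 = y.1) (h : ∀ i < k, x.2 i = y.2 i) :
    T x k = T y k := by
  induction k with
  | zero => exact h0
  | succ k ih =>
    simp only [T]
    rw [ih (fun i hi => h i (by omega)), h k (by omega)]

lemma exists_T (k : ℕ) : ∀ N : ℤ, ∃ z : DecimalRep, T z k = N := by
  induction k with
  | zero => intro N; exact ⟨(N, fun _ => 0), rfl⟩
  | succ k ih =>
    intro N
    obtain ⟨z, hz⟩ := ih (N / 10)
    refine ⟨(z.1, Function.update z.2 k ⟨(N % 10).toNat, by omega⟩), ?_⟩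
    have key : T (z.1, Function.update z.2 k ⟨(N % 10).toNat, by omega⟩) k = T z k :=
      T_congr _ z k rfl (fun i hi => Function.update_of_ne (show i ≠ k by omega) _ _)
    simp only [T]
    rw [key, hz]
    simp only [Function.update_self]
    omega

lemma no_between (x y z : DecimalRep) (h : ∀ k, |T x k - T y k| ≤ 1) (hx : z ≠ x) (hy : z ≠ y)
    (h1 : le x z) (h2 : le z y) : False := by
  have e1 : ∃ k, T x k < T z k := by
    by_contra hc
    push Not at hc
    exact hx (ext_T _ _ fun k => le_antisymm (hc k) ((trunc_le_iff _ _ _).1 (h1 k)))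
  have e2 : ∃ k, T z k < T y k := by
    by_contra hc
    push Not at hc
    exact hy (ext_T _ _ fun k => le_antisymm ((trunc_le_iff _ _ _).1 (h2 k)) (hc k))
  obtain ⟨a, ha⟩ := e1
  obtain ⟨b, hb⟩ := e2
  have ha' := lt_persist _ _ a (max a b) (le_max_left _ _) ha
  have hb' := lt_persist _ _ b (max a b) (le_max_right _ _) hb
  have := abs_le.1 (h (max a b))
  omega

lemma exists_between_T (x y : DecimalRep) (k : ℕ) (h : T x k + 1 < T y k) :
    ∃ z, z ≠ x ∧ z ≠ y ∧ le x z ∧ le z y := by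
  obtain ⟨z, hz⟩ := exists_T k (T x k + 1)
  refine ⟨z, ?_, ?_, le_of_lt_T _ _ k (by omega), le_of_lt_T _ _ k (by omega)⟩
  · rintro rfl; omega
  · rintro rfl; omega

end DecimalRep

open DecimalRep in
/-- `x ∼ y` iff `|[x]_k − [y]_k| ≤ 1/10^k` for every `k`. -/
theorem equiv_iff_trunc_close (x y : DecimalRep) :
    equiv x y ↔ ∀ k : ℕ, |trunc x k - trunc y k| ≤ 1 / 10 ^ k := by
  simp only [close_iff]
  constructor
  · intro he k
    by_contra hc
    apply he
    rw [abs_le] at hc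
    rcases lt_or_ge (T x k + 1) (T y k) with h | h
    · obtain ⟨z, a, b, c, d⟩ := exists_between_T x y k h
      exact ⟨z, a, b, Or.inl ⟨c, d⟩⟩
    · obtain ⟨z, a, b, c, d⟩ := exists_between_T y x k (by omega)
      exact ⟨z, b, a, Or.inr ⟨c, d⟩⟩
  · rintro h ⟨z, hx, hy, ⟨a, b⟩ | ⟨a, b⟩⟩
    · exact no_between x y z h hx hy a b
    · exact no_between y x z (fun k => by rw [abs_sub_comm]; exact h k) hy hx a b
end

section
/- For all x, y, z ∈ 𝓡 with x ⊕ z ∼ y ⊕ z, one has x ∼ y. -/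
namespace DecimalRep

lemma trunc_zero' (x : DecimalRep) : trunc x 0 = x.1 := by simp [trunc]

lemma trunc_succ' (x : DecimalRep) (k : ℕ) :
    trunc x (k+1) = trunc x k + ((x.2 k : ℕ) : ℚ) / 10 ^ (k+1) := by
  simp [trunc, Finset.sum_range_succ, add_assoc]

lemma trunc_mono' (x : DecimalRep) : Monotone (trunc x) := by
  refine monotone_nat_of_le_succ fun k => ?_
  rw [trunc_succ']
  have : (0:ℚ) ≤ ((x.2 k : ℕ) : ℚ) / 10 ^ (k+1) := by positivity
  linarith

lemma trunc_anti' (x : DecimalRep) : Antitone (fun k => trunc x k + 1 / 10 ^ k) := by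
  refine antitone_nat_of_succ_le fun k => ?_
  rw [trunc_succ']
  have h : ((x.2 k : ℕ) : ℚ) ≤ 9 := by
    have := (x.2 k).isLt
    exact_mod_cast (by omega : (x.2 k : ℕ) ≤ 9)
  have h2 : ((x.2 k : ℕ) : ℚ) / 10 ^ (k+1) ≤ 9 / 10 ^ (k+1) := by gcongr
  have h3 : (1:ℚ) / 10 ^ k = 9 / 10 ^ (k+1) + 1 / 10 ^ (k+1) := by
    rw [pow_succ]; field_simp; norm_num
  linarith

lemma trunc_le_add' (x : DecimalRep) (j k : ℕ) : trunc x j ≤ trunc x k + 1 / 10 ^ k := by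
  have h1 := trunc_mono' x (le_max_left j k)
  have h2 := trunc_anti' x (le_max_right j k)
  have h3 : (0:ℚ) < 1 / 10 ^ (max j k) := by positivity
  simp only at h2
  linarith

lemma trunc_int' (x : DecimalRep) (k : ℕ) : ∃ n : ℤ, trunc x k = n / 10 ^ k := by
  induction k with
  | zero => exact ⟨x.1, by simp [trunc_zero']⟩
  | succ k ih =>
    obtain ⟨n, hn⟩ := ih
    refine ⟨n * 10 + (x.2 k : ℕ), ?_⟩
    rw [trunc_succ', hn]
    push_cast
    rw [pow_succ]; field_simp

lemma trunc_gap' {x y : DecimalRep} {k : ℕ} (h : trunc x k < trunc y k) :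
    trunc x k + 1 / 10 ^ k ≤ trunc y k := by
  obtain ⟨n, hn⟩ := trunc_int' x k
  obtain ⟨m, hm⟩ := trunc_int' y k
  rw [hn, hm] at h ⊢
  have hp : (0:ℚ) < 10 ^ k := by positivity
  rw [div_lt_div_iff_of_pos_right hp] at h
  rw [← add_div, div_le_div_iff_of_pos_right hp]
  have : n < m := by exact_mod_cast h
  exact_mod_cast this

lemma exists_trunc_ne' {x y : DecimalRep} (h : x ≠ y) : ∃ k, trunc x k ≠ trunc y k := by
  by_contra! hc
  apply h
  refine Prod.ext ?_ (funext fun k => ?_)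
  · have := hc 0
    simp only [trunc_zero'] at this
    exact_mod_cast this
  · have h1 := hc (k+1)
    rw [trunc_succ', trunc_succ', hc k, add_right_inj, div_left_inj' (by positivity)] at h1
    exact Fin.ext (by exact_mod_cast h1)

/-- real value -/
noncomputable def val (x : DecimalRep) : ℝ := ⨆ k, (trunc x k : ℝ)

lemma bdd' (x : DecimalRep) : BddAbove (Set.range fun k => (trunc x k : ℝ)) := by
  refine ⟨((trunc x 0 + 1 / 10 ^ 0 : ℚ) : ℝ), ?_⟩
  rintro _ ⟨j, rfl⟩
  exact Rat.cast_le.2 (trunc_le_add' x j 0)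

lemma trunc_le_val (x : DecimalRep) (k : ℕ) : (trunc x k : ℝ) ≤ val x := le_ciSup (bdd' x) k

lemma val_le_of {x : DecimalRep} {c : ℝ} (h : ∀ k, (trunc x k : ℝ) ≤ c) : val x ≤ c := ciSup_le h

lemma val_le_trunc (x : DecimalRep) (k : ℕ) : val x ≤ ((trunc x k + 1 / 10 ^ k : ℚ) : ℝ) :=
  val_le_of fun j => Rat.cast_le.2 (trunc_le_add' x j k)

lemma val_mono {x y : DecimalRep} (h : le x y) : val x ≤ val y :=
  val_le_of fun k => (Rat.cast_le.2 (h k)).trans (trunc_le_val y k)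

lemma le_of_val_lt {x y : DecimalRep} (h : val x < val y) : le x y := by
  intro k
  by_contra! hc
  have h1 := trunc_gap' hc
  have h2 : ((trunc y k + 1 / 10 ^ k : ℚ) : ℝ) ≤ (trunc x k : ℝ) := Rat.cast_le.2 h1
  have := val_le_trunc y k
  have := trunc_le_val x k
  linarith

/-- construct from integer sequence -/
lemma trunc_of_seq (x : DecimalRep) (a : ℕ → ℤ) (h0 : x.1 = a 0)
    (h1 : ∀ k, (a (k+1)) = 10 * a k + ((x.2 k : ℕ) : ℤ)) (k : ℕ) :
    trunc x k = a k / 10 ^ k := by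
  induction k with
  | zero => simp [trunc_zero', h0]
  | succ k ih =>
    rw [trunc_succ', ih, h1]
    push_cast
    rw [pow_succ]; field_simp

lemma floor_step (t : ℚ) : 10 * ⌊t⌋ ≤ ⌊t * 10⌋ ∧ ⌊t * 10⌋ ≤ 10 * ⌊t⌋ + 9 := by
  constructor
  · rw [Int.le_floor]; push_cast
    linarith [Int.floor_le t]
  · rw [← Int.lt_add_one_iff, Int.floor_lt]; push_cast
    linarith [Int.lt_floor_add_one t]

lemma trunc_iota (q : ℚ) (k : ℕ) : trunc (iota q) k = ⌊q * 10 ^ k⌋ / 10 ^ k := by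
  refine trunc_of_seq (iota q) (fun k => ⌊q * 10 ^ k⌋) (by simp [iota]) (fun k => ?_) k
  have := floor_step (q * 10 ^ k)
  simp only [iota]
  rw [mul_assoc, ← pow_succ] at this
  omega

lemma trunc_iota_le (q : ℚ) (k : ℕ) : trunc (iota q) k ≤ q := by
  rw [trunc_iota, div_le_iff₀ (by positivity)]
  exact Int.floor_le _

lemma val_iota (q : ℚ) : val (iota q) = q := by
  apply le_antisymm
  · exact val_le_of fun k => Rat.cast_le.2 (trunc_iota_le q k)
  · refine le_of_forall_pos_le_add fun ε hε => ?_
    obtain ⟨k, hk⟩ := exists_pow_lt_of_lt_one hε (by norm_num : (1/10:ℝ) < 1)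
    have h : q ≤ trunc (iota q) k + 1 / 10 ^ k := by
      rw [trunc_iota, ← add_div, le_div_iff₀ (by positivity)]
      exact (Int.lt_floor_add_one _).le
    have h' : (q:ℝ) ≤ ((trunc (iota q) k + 1 / 10 ^ k : ℚ) : ℝ) := Rat.cast_le.2 h
    push_cast at h'
    have := trunc_le_val (iota q) k
    rw [one_div_pow] at hk
    linarith

lemma val_eq_of_equiv {x y : DecimalRep} (h : equiv x y) : val x = val y := by
  have key : ∀ {a b : DecimalRep}, val a < val b →
      ∃ z : DecimalRep, z ≠ a ∧ z ≠ b ∧ le a z ∧ le z b := by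
    intro a b hab
    obtain ⟨q, h1, h2⟩ := exists_rat_btwn hab
    rw [← val_iota] at h1 h2
    refine ⟨iota q, ?_, ?_, le_of_val_lt h1, le_of_val_lt h2⟩
    · intro e; rw [e] at h1; exact lt_irrefl _ h1
    · intro e; rw [e] at h2; exact lt_irrefl _ h2
  rcases lt_trichotomy (val x) (val y) with hl | he | hg
  · obtain ⟨z, h1, h2, h3⟩ := key hl
    exact (h ⟨z, h1, h2, Or.inl h3⟩).elim
  · exact he
  · obtain ⟨z, h1, h2, h3⟩ := key hg
    exact (h ⟨z, h2, h1, Or.inr h3⟩).elim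

lemma no_three {a w b : DecimalRep} (hab : val a = val b) (h1 : w ≠ a) (h2 : w ≠ b)
    (h3 : le a w) (h4 : le w b) : False := by
  have e1 : val a = val w := le_antisymm (val_mono h3) (hab ▸ val_mono h4)
  obtain ⟨k, hk⟩ := exists_trunc_ne' h1
  obtain ⟨l, hl⟩ := exists_trunc_ne' h2
  have g1 : ((trunc a k + 1 / 10 ^ k : ℚ) : ℝ) ≤ (trunc w k : ℝ) :=
    Rat.cast_le.2 (trunc_gap' (lt_of_le_of_ne (h3 k) hk.symm))
  have g2 : ((trunc w l + 1 / 10 ^ l : ℚ) : ℝ) ≤ (trunc b l : ℝ) :=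
    Rat.cast_le.2 (trunc_gap' (lt_of_le_of_ne (h4 l) hl))
  have a1 := val_le_trunc a k
  have a2 := trunc_le_val b l
  have h5 : ((trunc w l + 1 / 10 ^ l : ℚ) : ℝ) ≤ (trunc w k : ℝ) := by linarith
  have h6 := Rat.cast_le.1 h5
  have m1 := trunc_mono' w (le_max_left k l)
  have m2 := trunc_anti' w (le_max_right k l)
  have m3 : (0:ℚ) < 1 / 10 ^ (max k l) := by positivity
  simp only at m2
  linarith

lemma equiv_of_val_eq {x y : DecimalRep} (h : val x = val y) : equiv x y := by
  rintro ⟨w, h1, h2, ⟨h3, h4⟩ | ⟨h3, h4⟩⟩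
  · exact no_three h h1 h2 h3 h4
  · exact no_three h.symm h2 h1 h3 h4

lemma exists_lub (s : ℕ → ℚ) (hs : Monotone s) (C : ℚ) (hC : ∀ k, s k ≤ C) :
    ∃ M, IsLub { z | ∃ k : ℕ, z = iota (s k) } M ∧ ∀ j, ∃ k, trunc M j ≤ s k := by
  have ex : ∀ j : ℕ, ∃ a : ℤ, (∃ k, ⌊s k * 10 ^ j⌋ = a) ∧ ∀ k, ⌊s k * 10 ^ j⌋ ≤ a := by
    intro j
    obtain ⟨a, h1, h2⟩ := Int.exists_greatest_of_bdd
      (P := fun a => ∃ k, ⌊s k * 10 ^ j⌋ = a)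
      ⟨⌊C * 10 ^ j⌋, by
        rintro _ ⟨k, rfl⟩
        exact Int.floor_le_floor (by have := hC k; gcongr)⟩ ⟨_, 0, rfl⟩
    exact ⟨a, h1, fun k => h2 _ ⟨k, rfl⟩⟩
  choose a ha hle using ex
  have hmono : ∀ j, Monotone fun k => ⌊s k * 10 ^ j⌋ := by
    intro j k l hkl
    have := hs hkl
    exact Int.floor_le_floor (by gcongr)
  have step : ∀ j, 10 * a j ≤ a (j+1) ∧ a (j+1) ≤ 10 * a j + 9 := by
    intro j
    obtain ⟨k, hk⟩ := ha j
    obtain ⟨l, hl⟩ := ha (j+1)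
    have e1 : ⌊s (max k l) * 10 ^ j⌋ = a j :=
      le_antisymm (hle j _) (hk ▸ hmono j (le_max_left k l))
    have e2 : ⌊s (max k l) * 10 ^ (j+1)⌋ = a (j+1) :=
      le_antisymm (hle (j+1) _) (hl ▸ hmono (j+1) (le_max_right k l))
    have := floor_step (s (max k l) * 10 ^ j)
    rw [mul_assoc, ← pow_succ, e1, e2] at this
    exact this
  let M : DecimalRep := (a 0, fun k => ⟨(a (k+1) - 10 * a k).toNat, by
    have := step k
    omega⟩)
  have hM : ∀ j, trunc M j = a j / 10 ^ j := by
    refine trunc_of_seq M a rfl fun k => ?_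
    have := step k
    simp only [M]
    omega
  refine ⟨M, ⟨?_, ?_⟩, ?_⟩
  · rintro _ ⟨k, rfl⟩ j
    rw [hM, trunc_iota]
    have : ((⌊s k * 10 ^ j⌋ : ℤ) : ℚ) ≤ a j := by exact_mod_cast hle j k
    gcongr
  · intro M' h j
    obtain ⟨k, hk⟩ := ha j
    have := h _ ⟨k, rfl⟩ j
    rwa [trunc_iota, hk, ← hM] at this
  · intro j
    obtain ⟨k, hk⟩ := ha j
    refine ⟨k, ?_⟩
    rw [hM, ← hk, ← trunc_iota]
    exact trunc_iota_le _ _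

lemma val_add (x y : DecimalRep) : val (add x y) = val x + val y := by
  obtain ⟨M, hM, hM2⟩ := exists_lub (fun k => trunc x k + trunc y k)
    (fun i j h => add_le_add (trunc_mono' x h) (trunc_mono' y h))
    (trunc x 0 + 1 / 10 ^ 0 + (trunc y 0 + 1 / 10 ^ 0))
    (fun k => add_le_add (trunc_le_add' x k 0) (trunc_le_add' y k 0))
  have hex : ∃ M, IsLub { z | ∃ k : ℕ, z = iota (trunc x k + trunc y k) } M := ⟨M, hM⟩
  have hL : IsLub { z | ∃ k : ℕ, z = iota (trunc x k + trunc y k) } (add x y) := by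
    unfold add sup
    rw [dif_pos hex]
    exact hex.choose_spec
  apply le_antisymm
  · refine (val_mono (hL.2 M hM.1)).trans (val_le_of fun j => ?_)
    obtain ⟨k, hk⟩ := hM2 j
    have hk' : (trunc M j : ℝ) ≤ ((trunc x k + trunc y k : ℚ) : ℝ) := Rat.cast_le.2 hk
    push_cast at hk'
    linarith [trunc_le_val x k, trunc_le_val y k]
  · have h1 : ∀ k, (trunc x k : ℝ) + trunc y k ≤ val (add x y) := by
      intro k
      have := val_mono (hL.1 _ ⟨k, rfl⟩)
      rw [val_iota] at this
      exact_mod_cast this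
    have h2 : ∀ i j, (trunc x i : ℝ) + trunc y j ≤ val (add x y) := by
      intro i j
      refine le_trans ?_ (h1 (max i j))
      exact add_le_add (Rat.cast_le.2 (trunc_mono' x (le_max_left i j)))
        (Rat.cast_le.2 (trunc_mono' y (le_max_right i j)))
    have h3 : ∀ j, val x ≤ val (add x y) - trunc y j := fun j =>
      val_le_of fun i => by linarith [h2 i j]
    have h4 : val y ≤ val (add x y) - val x := val_le_of fun j => by linarith [h3 j]
    linarith

end DecimalRep

open DecimalRep in
/-- Cancellation for addition on `𝓡`: `x ⊕ z ∼ y ⊕ z` implies `x ∼ y`. -/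
theorem equiv_of_add_equiv (x y z : DecimalRep) (h : equiv (add x z) (add y z)) :
    equiv x y := by
  apply equiv_of_val_eq
  have h1 := val_eq_of_equiv h
  rw [val_add, val_add] at h1
  linarith
end

section
/- For all x, y ∈ 𝓡, Ψ(x ⊗ y) = Ψ(x) ⊗ y = x ⊗ Ψ(y) (equalities in 𝓡). -/
namespace DecimalRep

theorem aux_psi_psi (x : DecimalRep) : psi (psi x) = x := by
  refine Prod.ext ?_ ?_
  · simp [psi]
  · funext k
    apply Fin.ext
    have := (x.2 k).isLt
    simp only [psi]
    omega

theorem aux_trunc_lower (x : DecimalRep) (k : ℕ) : (x.1 : ℚ) ≤ trunc x k := by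
  unfold trunc
  have : 0 ≤ ∑ i ∈ Finset.range k, ((x.2 i : ℕ) : ℚ) / 10 ^ (i + 1) :=
    Finset.sum_nonneg (fun i _ => by positivity)
  linarith

theorem aux_trunc_upper (x : DecimalRep) (k : ℕ) :
    trunc x k ≤ (x.1 : ℚ) + 1 - 1 / 10 ^ k := by
  induction k with
  | zero => simp [trunc]
  | succ k ih =>
    have e : trunc x (k + 1) = trunc x k + ((x.2 k : ℕ) : ℚ) / 10 ^ (k + 1) := by
      simp only [trunc, Finset.sum_range_succ]; ring
    have h9 : ((x.2 k : ℕ) : ℚ) ≤ 9 := by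
      have := (x.2 k).isLt
      exact_mod_cast (by omega : (x.2 k : ℕ) ≤ 9)
    have h : ((x.2 k : ℕ) : ℚ) / 10 ^ (k + 1) ≤ 9 / 10 ^ (k + 1) := by gcongr
    have h2 : (1 : ℚ) / 10 ^ k = 9 / 10 ^ (k + 1) + 1 / 10 ^ (k + 1) := by
      field_simp; ring
    rw [e]; linarith

theorem aux_nonneg (x : DecimalRep) : le (iota 0) x ↔ 0 ≤ x.1 := by
  have h0 : ∀ k, trunc (iota 0) k = 0 := by intro k; simp [trunc, iota]
  constructor
  · intro h
    have := h 0
    rw [h0] at this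
    simpa [trunc] using this
  · intro h k
    rw [h0]
    exact le_trans (by exact_mod_cast h) (aux_trunc_lower x k)

theorem aux_le_psi (x : DecimalRep) : le x (psi x) ↔ x.1 < 0 := by
  constructor
  · intro h
    have := h 0
    simp only [trunc, psi, Finset.range_zero, Finset.sum_empty, add_zero] at this
    have : x.1 ≤ -1 - x.1 := by exact_mod_cast this
    omega
  · intro h k
    have h1 := aux_trunc_upper x k
    have h2 := aux_trunc_lower (psi x) k
    have h3 : (0 : ℚ) ≤ ((psi x).1 : ℚ) := by
      have : 0 ≤ (psi x).1 := by simp only [psi]; omega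
      exact_mod_cast this
    have h4 : (x.1 : ℚ) + 1 ≤ 0 := by exact_mod_cast h
    have h5 : (0 : ℚ) ≤ 1 / 10 ^ k := by positivity
    linarith

theorem aux_norm_psi (x : DecimalRep) : norm (psi x) = norm x := by
  have hp := aux_le_psi (psi x)
  rw [aux_psi_psi] at hp
  unfold norm
  simp only [aux_psi_psi, hp, aux_le_psi x]
  have : (psi x).1 = -1 - x.1 := rfl
  by_cases h : x.1 < 0
  · rw [if_pos h, if_neg (by omega)]
  · rw [if_neg h, if_pos (by omega)]

theorem aux_sign_psi (x : DecimalRep) :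
    (sign x = 0 ∧ sign (psi x) = 1) ∨ (sign x = 1 ∧ sign (psi x) = 0) := by
  unfold sign
  simp only [aux_nonneg]
  have : (psi x).1 = -1 - x.1 := rfl
  by_cases h : 0 ≤ x.1
  · left; rw [if_pos h, if_neg (by omega)]; simp
  · right; rw [if_neg h, if_pos (by omega)]; simp

end DecimalRep

open DecimalRep in
/-- `Ψ(x ⊗ y) = Ψ(x) ⊗ y = x ⊗ Ψ(y)` as equalities in `𝓡`. -/
theorem psi_mul (x y : DecimalRep) :
    psi (mul x y) = mul (psi x) y ∧ mul (psi x) y = mul x (psi y) := by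
  unfold mul
  rw [aux_norm_psi, aux_norm_psi]
  rcases aux_sign_psi x with ⟨h1, h2⟩ | ⟨h1, h2⟩ <;>
  rcases aux_sign_psi y with ⟨h3, h4⟩ | ⟨h3, h4⟩ <;>
  simp [h1, h2, h3, h4, aux_psi_psi]
end
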